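/- arXiv:1208.5702 — 6 statements merged into one kernel-verified Lean document; each statement's English description precedes it below -/
import Mathlib

section
/- Let p ≥ 1, let Ŝ be a p×p real symmetric matrix, and let λ > 0, μ > 0, ε > 0. Assume there exists a triple (Θ̂, Σ̂, Λ̂) of p×p real symmetric matrices satisfying the KKT conditions: Θ̂ = Σ̂; Θ̂ − εI positive semidefinite; for all j ≠ l, (−Λ̂ − Σ̂ + Ŝ)_{jl}/λ lies in the subdifferential of the absolute value at Σ̂_{jl}; (Σ̂ − Ŝ)_{jj} + Λ̂_{jj} = 0 for all j; and ⟨Λ̂, Θ − Θ̂⟩ ≤ 0 for every symmetric Θ with Θ − εI positive semidefinite. Then for any symmetric starting matrices Σ^0, Λ^0, the sequence (Θ^i, Σ^i, Λ^i) generated by the alternating direction iteration — Θ^{i+1} = the Frobenius-norm projection of Σ^i + μΛ^i onto {Θ symmetric : Θ − εI positive semidefinite}; Σ^{i+1} = S(μ(Ŝ − Λ^i) + Θ^{i+1}, λμ)/(1+μ); Λ^{i+1} = Λ^i − (Θ^{i+1} − Σ^{i+1})/μ — converges, and its limit (Θ̄, Σ̄) satisfies Θ̄ = Σ̄, Θ̄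 − εI positive semidefinite, and Σ̄ minimizes the objective ½‖Σ − Ŝ‖_F² + λ|Σ|₁ over all symmetric matrices Σ with Σ − εI positive semidefinite. -/
open scoped BigOperators Topology

/-- The squared Frobenius norm of a real matrix. -/
noncomputable def frobSq {p : ℕ} (A : Matrix (Fin p) (Fin p) ℝ) : ℝ :=
  ∑ i, ∑ j, (A i j) ^ 2

/-- The Frobenius norm of a real matrix. -/
noncomputable def frobNorm {p : ℕ} (A : Matrix (Fin p) (Fin p) ℝ) : ℝ :=
  Real.sqrt (frobSq A)

/-- The Frobenius (trace) inner product `⟨A, B⟩ = trace (Aᵀ B)` of two real matrices. -/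
noncomputable def finner {p : ℕ} (A B : Matrix (Fin p) (Fin p) ℝ) : ℝ :=
  ∑ i, ∑ j, A i j * B i j

/-- Element-wise ℓ¹-norm of the off-diagonal entries of a matrix. -/
noncomputable def offL1 {p : ℕ} (A : Matrix (Fin p) (Fin p) ℝ) : ℝ :=
  ∑ i, ∑ j, if i ≠ j then |A i j| else 0

/-- The off-diagonal soft-thresholding operator:
`S(Z,τ)_{ij} = sign(z_{ij}) max(|z_{ij}| - τ, 0)` for `i ≠ j`, `S(Z,τ)_{ii} = z_{ii}`. -/
noncomputable def softThr {p : ℕ} (Z : Matrix (Fin p) (Fin p) ℝ) (τ : ℝ) :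
    Matrix (Fin p) (Fin p) ℝ :=
  Matrix.of fun i j => if i = j then Z i j else Real.sign (Z i j) * max (|Z i j| - τ) 0

/-- `g` lies in the subdifferential of the absolute value at `y`:
`{sign y}` if `y ≠ 0`, and the interval `[-1, 1]` if `y = 0`. -/
def inSubdiffAbs (g y : ℝ) : Prop :=
  if y = 0 then |g| ≤ 1 else g = Real.sign y


lemma soft_scalar (z τ c s : ℝ) (hτ : 0 < τ) (hc : 0 < c)
    (hs : s = c⁻¹ * (Real.sign z * max (|z| - τ) 0)) (y : ℝ) :
    τ * |s| + (z - c * s) * (y - s) ≤ τ * |y| := by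
  have hcs : c * s = Real.sign z * max (|z| - τ) 0 := by
    rw [hs]; field_simp
  rw [hcs]
  rcases le_or_gt (|z|) τ with h | h
  · have hm : max (|z| - τ) 0 = 0 := max_eq_right (by linarith)
    rw [hm] at hs ⊢
    have hs0 : s = 0 := by simpa using hs
    rw [hs0]
    have h1 : z * y ≤ |z| * |y| := by rw [← abs_mul]; exact le_abs_self _
    have h2 : |z| * |y| ≤ τ * |y| := mul_le_mul_of_nonneg_right h (abs_nonneg _)
    simp
    linarith
  · have hm : max (|z| - τ) 0 = |z| - τ := max_eq_left (by linarith)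
    rw [hm] at hs ⊢
    have hci : 0 < c⁻¹ := inv_pos.mpr hc
    rcases lt_trichotomy z 0 with hz | hz | hz
    · rw [Real.sign_of_neg hz] at hs ⊢
      have hsn : s ≤ 0 := by
        rw [hs]; nlinarith [mul_pos hci (sub_pos.mpr h)]
      rw [abs_of_neg hz, abs_of_nonpos hsn]
      nlinarith [neg_abs_le y]
    · rw [hz] at h; simp at h; linarith
    · rw [Real.sign_of_pos hz] at hs ⊢
      have hsn : 0 ≤ s := by
        rw [hs]; nlinarith [mul_pos hci (sub_pos.mpr h)]
      rw [abs_of_pos hz, abs_of_nonneg hsn]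
      nlinarith [le_abs_self y]

lemma subdiff_scalar (g s : ℝ) (h : inSubdiffAbs g s) (y : ℝ) :
    |s| + g * (y - s) ≤ |y| := by
  unfold inSubdiffAbs at h
  split_ifs at h with h0
  · subst h0
    have h1 : g * y ≤ |g| * |y| := by rw [← abs_mul]; exact le_abs_self _
    have h2 : |g| * |y| ≤ 1 * |y| := mul_le_mul_of_nonneg_right h (abs_nonneg _)
    simp
    linarith
  · rcases lt_or_gt_of_ne h0 with hz | hz
    · rw [Real.sign_of_neg hz] at h
      rw [h, abs_of_neg hz]; linarith [neg_abs_le y]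
    · rw [Real.sign_of_pos hz] at h
      rw [h, abs_of_pos hz]; linarith [le_abs_self y]

/-- subgradient relation -/
def SubG {p : ℕ} (Shat : Matrix (Fin p) (Fin p) ℝ) (lam : ℝ)
    (L S : Matrix (Fin p) (Fin p) ℝ) : Prop :=
  ∀ Y : Matrix (Fin p) (Fin p) ℝ,
    lam * offL1 S + finner (Shat - S - L) (Y - S) ≤ lam * offL1 Y

lemma subG_of_entry {p : ℕ} (Shat : Matrix (Fin p) (Fin p) ℝ) (lam : ℝ)
    (L S : Matrix (Fin p) (Fin p) ℝ)
    (hoff : ∀ i j, i ≠ j → ∀ y : ℝ,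
      lam * |S i j| + (Shat - S - L) i j * (y - S i j) ≤ lam * |y|)
    (hd : ∀ i, (Shat - S - L) i i = 0) : SubG Shat lam L S := by
  intro Y
  unfold offL1 finner
  simp only [Finset.mul_sum, ← Finset.sum_add_distrib]
  refine Finset.sum_le_sum fun i _ => Finset.sum_le_sum fun j _ => ?_
  by_cases h : i = j
  · subst h
    simp [hd]
  · simpa [h] using hoff i j h (Y i j)

lemma frobSq_nonneg {p : ℕ} (A : Matrix (Fin p) (Fin p) ℝ) : 0 ≤ frobSq A :=
  Finset.sum_nonneg fun _ _ => Finset.sum_nonneg fun _ _ => sq_nonneg _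

lemma entry_sq_le {p : ℕ} (A : Matrix (Fin p) (Fin p) ℝ) (i j : Fin p) :
    (A i j) ^ 2 ≤ frobSq A := by
  unfold frobSq
  refine le_trans ?_ (Finset.single_le_sum (f := fun i => ∑ j, (A i j) ^ 2)
    (fun _ _ => Finset.sum_nonneg fun _ _ => sq_nonneg _) (Finset.mem_univ i))
  exact Finset.single_le_sum (f := fun j => (A i j) ^ 2)
    (fun _ _ => sq_nonneg _) (Finset.mem_univ j)

lemma tendsto_of_frobSq {p : ℕ} (A : ℕ → Matrix (Fin p) (Fin p) ℝ)
    (B : Matrix (Fin p) (Fin p) ℝ)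
    (h : Filter.Tendsto (fun n => frobSq (A n - B)) Filter.atTop (𝓝 0)) :
    Filter.Tendsto A Filter.atTop (𝓝 B) := by
  refine tendsto_pi_nhds.2 fun i => tendsto_pi_nhds.2 fun j => ?_
  rw [tendsto_iff_dist_tendsto_zero]
  have h2 : Filter.Tendsto (fun n => Real.sqrt (frobSq (A n - B))) Filter.atTop (𝓝 0) := by
    simpa using h.sqrt
  refine squeeze_zero (fun _ => dist_nonneg) (fun n => ?_) h2
  rw [Real.dist_eq]
  exact Real.abs_le_sqrt (entry_sq_le (A n - B) i j)

lemma continuous_frobSq {p : ℕ} :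
    Continuous (frobSq : Matrix (Fin p) (Fin p) ℝ → ℝ) := by
  unfold frobSq
  fun_prop

lemma continuous_offL1 {p : ℕ} :
    Continuous (offL1 : Matrix (Fin p) (Fin p) ℝ → ℝ) := by
  unfold offL1
  refine continuous_finsetSum _ fun i _ => continuous_finsetSum _ fun j _ => ?_
  split_ifs
  · fun_prop
  · fun_prop

lemma tendsto_finner {p : ℕ} {A B : ℕ → Matrix (Fin p) (Fin p) ℝ}
    {a b : Matrix (Fin p) (Fin p) ℝ}
    (hA : Filter.Tendsto A Filter.atTop (𝓝 a)) (hB : Filter.Tendsto B Filter.atTop (𝓝 b)) :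
    Filter.Tendsto (fun n => finner (A n) (B n)) Filter.atTop (𝓝 (finner a b)) :=
  by
  unfold finner
  refine tendsto_finsetSum _ fun i _ => tendsto_finsetSum _ fun j _ => ?_
  exact (tendsto_pi_nhds.1 (tendsto_pi_nhds.1 hA i) j).mul
    (tendsto_pi_nhds.1 (tendsto_pi_nhds.1 hB i) j)

lemma frobSq_line {p : ℕ} (W X T : Matrix (Fin p) (Fin p) ℝ) (t : ℝ) :
    frobSq (W + t • (T - W) - X) =
      frobSq (W - X) + 2 * t * finner (W - X) (T - W) + t ^ 2 * frobSq (T - W) := by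
  unfold frobSq finner
  simp only [Finset.mul_sum, ← Finset.sum_add_distrib]
  refine Finset.sum_congr rfl fun i _ => Finset.sum_congr rfl fun j _ => ?_
  simp only [Matrix.add_apply, Matrix.sub_apply, Matrix.smul_apply, smul_eq_mul]
  ring

lemma proj_vi {p : ℕ} (ε : ℝ) (W X : Matrix (Fin p) (Fin p) ℝ)
    (hW : W.IsSymm) (hWp : (W - ε • (1 : Matrix (Fin p) (Fin p) ℝ)).PosSemidef)
    (h : ∀ T : Matrix (Fin p) (Fin p) ℝ, T.IsSymm →
        (T - ε • (1 : Matrix (Fin p) (Fin p) ℝ)).PosSemidef →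
        frobNorm (W - X) ≤ frobNorm (T - X))
    (T : Matrix (Fin p) (Fin p) ℝ) (hT : T.IsSymm)
    (hTp : (T - ε • (1 : Matrix (Fin p) (Fin p) ℝ)).PosSemidef) :
    0 ≤ finner (W - X) (T - W) := by
  have key : ∀ t : ℝ, 0 < t → t ≤ 1 →
      0 ≤ 2 * finner (W - X) (T - W) + t * frobSq (T - W) := by
    intro t ht ht1
    have hs : (W + t • (T - W)).IsSymm := hW.add ((hT.sub hW).smul t)
    have hps : (W + t • (T - W) - ε • (1 : Matrix (Fin p) (Fin p) ℝ)).PosSemidef := by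
      have e : W + t • (T - W) - ε • (1 : Matrix (Fin p) (Fin p) ℝ) =
          (1 - t) • (W - ε • (1 : Matrix (Fin p) (Fin p) ℝ)) +
          t • (T - ε • (1 : Matrix (Fin p) (Fin p) ℝ)) := by
        module
      rw [e]
      exact (hWp.smul (by linarith)).add (hTp.smul ht.le)
    have h1 := h _ hs hps
    unfold frobNorm at h1
    rw [Real.sqrt_le_sqrt_iff (frobSq_nonneg _), frobSq_line] at h1
    by_contra hneg
    push Not at hneg
    nlinarith
  by_contra hc
  push Not at hc
  have hd := frobSq_nonneg (T - W)
  set c := finner (W - X) (T - W)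
  set d := frobSq (T - W)
  have hdc : 0 < d - c := by linarith
  have := key (-c / (d - c)) (div_pos (by linarith) hdc) ((div_le_one hdc).2 (by linarith))
  have h2 : -c / (d - c) * d ≤ -c := by
    rw [div_mul_eq_mul_div, div_le_iff₀ hdc]
    nlinarith
  linarith

lemma step_ineq {p : ℕ} (Shat : Matrix (Fin p) (Fin p) ℝ) (lam mu : ℝ) (hmu : 0 < mu)
    (S0 L0 W S L Sh Lh : Matrix (Fin p) (Fin p) ℝ)
    (hL : L = L0 - mu⁻¹ • (W - S))
    (g : SubG Shat lam L S) (g0 : SubG Shat lam L0 S0) (gh : SubG Shat lam Lh Sh)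
    (h1 : 0 ≤ finner (S - S0 - mu • L) (Sh - W))
    (h2 : finner Lh (W - Sh) ≤ 0) :
    frobSq (S - Sh) + mu ^ 2 * frobSq (L - Lh) + frobSq (S - S0) + mu ^ 2 * frobSq (L - L0)
      + 2 * mu * frobSq (S - Sh) ≤ frobSq (S0 - Sh) + mu ^ 2 * frobSq (L0 - Lh) := by
  have hW : W = S + mu • (L0 - L) := by
    rw [hL, sub_sub_cancel, smul_smul, mul_inv_cancel₀ hmu.ne', one_smul]; abel
  clear hL
  subst hW
  have a1 := g Sh
  have a2 := gh S
  have b1 := g S0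
  have b2 := g0 S
  have hS0 := frobSq_nonneg (S - S0)
  have a : finner (Shat - S - L) (Sh - S) + finner (Shat - Sh - Lh) (S - Sh) ≤ 0 := by linarith
  have b : finner (Shat - S - L) (S0 - S) + finner (Shat - S0 - L0) (S - S0) ≤ 0 := by linarith
  have id : frobSq (S0 - Sh) + mu ^ 2 * frobSq (L0 - Lh) =
    frobSq (S - Sh) + mu ^ 2 * frobSq (L - Lh) + frobSq (S - S0) + mu ^ 2 * frobSq (L - L0)
      + 2 * mu * frobSq (S - Sh) + 2 * mu * frobSq (S - S0)
      + 2 * finner (S - S0 - mu • L) (Sh - (S + mu • (L0 - L)))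
      - 2 * mu * finner Lh (S + mu • (L0 - L) - Sh)
      - 2 * mu * (finner (Shat - S - L) (Sh - S) + finner (Shat - Sh - Lh) (S - Sh))
      - 2 * mu * (finner (Shat - S - L) (S0 - S) + finner (Shat - S0 - L0) (S - S0)) := by
    unfold frobSq finner
    simp only [Finset.mul_sum, ← Finset.sum_add_distrib, ← Finset.sum_sub_distrib]
    refine Finset.sum_congr rfl fun i _ => Finset.sum_congr rfl fun j _ => ?_
    simp only [Matrix.add_apply, Matrix.sub_apply, Matrix.smul_apply, smul_eq_mul]
    ring
  have m1 := mul_nonneg hmu.le hS0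
  have m2 := mul_nonneg hmu.le (neg_nonneg.2 h2)
  have m3 := mul_nonneg hmu.le (neg_nonneg.2 a)
  have m4 := mul_nonneg hmu.le (neg_nonneg.2 b)
  linarith

lemma kkt_min {p : ℕ} (Shat : Matrix (Fin p) (Fin p) ℝ) (lam : ℝ)
    (Sh Lh S : Matrix (Fin p) (Fin p) ℝ) (gh : SubG Shat lam Lh Sh)
    (h2 : finner Lh (S - Sh) ≤ 0) :
    frobSq (Sh - Shat) / 2 + lam * offL1 Sh ≤ frobSq (S - Shat) / 2 + lam * offL1 S := by
  have a := gh S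
  have hn := frobSq_nonneg (S - Sh)
  have id : frobSq (S - Shat) = frobSq (Sh - Shat) + frobSq (S - Sh)
      - 2 * finner (Shat - Sh - Lh) (S - Sh) - 2 * finner Lh (S - Sh) := by
    unfold frobSq finner
    simp only [Finset.mul_sum, ← Finset.sum_add_distrib, ← Finset.sum_sub_distrib]
    refine Finset.sum_congr rfl fun i _ => Finset.sum_congr rfl fun j _ => ?_
    simp only [Matrix.sub_apply]
    ring
  linarith

lemma bdd_subseq {p : ℕ} (A : ℕ → Matrix (Fin p) (Fin p) ℝ) (B : Matrix (Fin p) (Fin p) ℝ)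
    (R : ℝ) (h : ∀ n, frobSq (A n - B) ≤ R) :
    ∃ (a : Matrix (Fin p) (Fin p) ℝ) (φ : ℕ → ℕ), StrictMono φ ∧
      Filter.Tendsto (A ∘ φ) Filter.atTop (𝓝 a) := by
  let K : Set (Fin p → Fin p → ℝ) :=
    Set.Icc (fun i j => B i j - Real.sqrt R) (fun i j => B i j + Real.sqrt R)
  have hK : IsCompact K := isCompact_Icc
  have hA : ∀ n, (A n : Fin p → Fin p → ℝ) ∈ K := by
    intro n
    have : ∀ i j, |A n i j - B i j| ≤ Real.sqrt R := fun i j =>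
      Real.abs_le_sqrt ((entry_sq_le (A n - B) i j).trans (h n))
    constructor
    · intro i j
      have := (abs_le.1 (this i j)).1
      show B i j - Real.sqrt R ≤ A n i j
      linarith
    · intro i j
      have := (abs_le.1 (this i j)).2
      show A n i j ≤ B i j + Real.sqrt R
      linarith
  obtain ⟨a, _, φ, hφ, ht⟩ := hK.tendsto_subseq hA
  exact ⟨a, φ, hφ, ht⟩

/-- Global convergence of the alternating direction method: provided a KKT point of the
positive-definite constrained ℓ¹-penalized problem exists, the ADMM sequence
`(Θⁱ, Σⁱ, Λⁱ)` converges from any symmetric starting point, its limit satisfies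
`Θ̄ = Σ̄` with `Θ̄ − εI ⪰ 0`, and `Σ̄` minimizes `½‖Σ − Ŝ‖_F² + λ|Σ|₁` over all
symmetric `Σ` with `Σ − εI ⪰ 0`. -/
theorem stmt_1 {p : ℕ} (hp : 1 ≤ p)
    (Shat : Matrix (Fin p) (Fin p) ℝ) (hShat : Shat.IsSymm)
    (lam mu ε : ℝ) (hlam : 0 < lam) (hmu : 0 < mu) (hε : 0 < ε)
    -- existence of a KKT point
    (hKKT : ∃ That Sghat Lmhat : Matrix (Fin p) (Fin p) ℝ,
      That.IsSymm ∧ Sghat.IsSymm ∧ Lmhat.IsSymm ∧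
      That = Sghat ∧
      (That - ε • (1 : Matrix (Fin p) (Fin p) ℝ)).PosSemidef ∧
      (∀ j l, j ≠ l → inSubdiffAbs ((-Lmhat - Sghat + Shat) j l / lam) (Sghat j l)) ∧
      (∀ j, (Sghat - Shat) j j + Lmhat j j = 0) ∧
      (∀ Th : Matrix (Fin p) (Fin p) ℝ, Th.IsSymm →
        (Th - ε • (1 : Matrix (Fin p) (Fin p) ℝ)).PosSemidef →
        finner Lmhat (Th - That) ≤ 0))
    -- the alternating direction iterates
    (Th Sg Lm : ℕ → Matrix (Fin p) (Fin p) ℝ)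
    (hSg0 : (Sg 0).IsSymm) (hLm0 : (Lm 0).IsSymm)
    (hThstep : ∀ i, (Th (i + 1)).IsSymm ∧
      (Th (i + 1) - ε • (1 : Matrix (Fin p) (Fin p) ℝ)).PosSemidef ∧
      ∀ T : Matrix (Fin p) (Fin p) ℝ, T.IsSymm →
        (T - ε • (1 : Matrix (Fin p) (Fin p) ℝ)).PosSemidef →
        frobNorm (Th (i + 1) - (Sg i + mu • Lm i)) ≤ frobNorm (T - (Sg i + mu • Lm i)))
    (hSgstep : ∀ i, Sg (i + 1) =
      (1 + mu)⁻¹ • softThr (mu • (Shat - Lm i) + Th (i + 1)) (lam * mu))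
    (hLmstep : ∀ i, Lm (i + 1) = Lm i - mu⁻¹ • (Th (i + 1) - Sg (i + 1))) :
    ∃ Thbar Sgbar Lmbar : Matrix (Fin p) (Fin p) ℝ,
      Filter.Tendsto Th Filter.atTop (𝓝 Thbar) ∧
      Filter.Tendsto Sg Filter.atTop (𝓝 Sgbar) ∧
      Filter.Tendsto Lm Filter.atTop (𝓝 Lmbar) ∧
      Thbar = Sgbar ∧
      (Thbar - ε • (1 : Matrix (Fin p) (Fin p) ℝ)).PosSemidef ∧
      ∀ S : Matrix (Fin p) (Fin p) ℝ, S.IsSymm →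
        (S - ε • (1 : Matrix (Fin p) (Fin p) ℝ)).PosSemidef →
        frobSq (Sgbar - Shat) / 2 + lam * offL1 Sgbar ≤
          frobSq (S - Shat) / 2 + lam * offL1 S := by
  obtain ⟨That, Sh, Lh, -, hShs, -, rfl, hShp, hsub, hdiag, hvi⟩ := hKKT
  have gh : SubG Shat lam Lh That := by
    refine subG_of_entry _ _ _ _ (fun i j hij y => ?_) (fun i => ?_)
    · have := subdiff_scalar _ _ (hsub i j hij) y
      have h3 := mul_le_mul_of_nonneg_left this hlam.le
      have e : lam * (|That i j| + (-Lh - That + Shat) i j / lam * (y - That i j)) =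
          lam * |That i j| + (Shat - That - Lh) i j * (y - That i j) := by
        simp only [Matrix.add_apply, Matrix.sub_apply, Matrix.neg_apply]
        field_simp
        ring
      linarith
    · have := hdiag i
      simp only [Matrix.sub_apply] at this ⊢
      linarith
  have g : ∀ n, SubG Shat lam (Lm (n + 1)) (Sg (n + 1)) := by
    intro n
    have hLe : ∀ i j, mu * Lm (n + 1) i j = mu * Lm n i j - (Th (n + 1) i j - Sg (n + 1) i j) := by
      intro i j
      rw [hLmstep n]
      simp only [Matrix.sub_apply, Matrix.smul_apply, smul_eq_mul]
      field_simp
    have hSe : ∀ i j, Sg (n + 1) i j = (1 + mu)⁻¹ *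
        softThr (mu • (Shat - Lm n) + Th (n + 1)) (lam * mu) i j := by
      intro i j
      rw [hSgstep n]
      simp only [Matrix.smul_apply, smul_eq_mul]
    have h1mu : 0 < 1 + mu := by linarith
    refine subG_of_entry _ _ _ _ (fun i j hij y => ?_) (fun i => ?_)
    · have hs := hSe i j
      simp only [softThr, Matrix.of_apply, if_neg hij] at hs
      have h4 := soft_scalar _ (lam * mu) (1 + mu) _ (mul_pos hlam hmu) h1mu hs y
      have e : (mu • (Shat - Lm n) + Th (n + 1)) i j - (1 + mu) * Sg (n + 1) i j =
          mu * (Shat - Sg (n + 1) - Lm (n + 1)) i j := by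
        simp only [Matrix.add_apply, Matrix.sub_apply, Matrix.smul_apply, smul_eq_mul]
        linarith [hLe i j]
      rw [e] at h4
      refine le_of_mul_le_mul_left ?_ hmu
      linarith
    · have hs := hSe i i
      simp only [softThr, Matrix.of_apply, if_true, Matrix.add_apply, Matrix.sub_apply,
        Matrix.smul_apply, smul_eq_mul] at hs
      have hs' : (1 + mu) * Sg (n + 1) i i = mu * (Shat i i - Lm n i i) + Th (n + 1) i i := by
        rw [hs]; field_simp
      have : mu * (Shat i i - Sg (n + 1) i i - Lm (n + 1) i i) = 0 := by
        linarith [hLe i i]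
      simpa [hmu.ne'] using this
  have pv : ∀ n, ∀ T : Matrix (Fin p) (Fin p) ℝ, T.IsSymm →
      (T - ε • (1 : Matrix (Fin p) (Fin p) ℝ)).PosSemidef →
      0 ≤ finner (Sg (n + 1) - Sg n - mu • Lm (n + 1)) (T - Th (n + 1)) := by
    intro n T hT hTp
    have := proj_vi ε (Th (n + 1)) (Sg n + mu • Lm n) (hThstep n).1 (hThstep n).2.1
      (hThstep n).2.2 T hT hTp
    have e : Th (n + 1) - (Sg n + mu • Lm n) = Sg (n + 1) - Sg n - mu • Lm (n + 1) := by
      rw [hLmstep n, smul_sub, smul_smul, mul_inv_cancel₀ hmu.ne', one_smul]; abel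
    rwa [e] at this
  -- the Lyapunov inequality at an arbitrary KKT multiplier
  have lyap : ∀ Lb : Matrix (Fin p) (Fin p) ℝ, SubG Shat lam Lb That →
      (∀ T : Matrix (Fin p) (Fin p) ℝ, T.IsSymm →
        (T - ε • (1 : Matrix (Fin p) (Fin p) ℝ)).PosSemidef → finner Lb (T - That) ≤ 0) →
      ∀ n, frobSq (Sg (n + 2) - That) + mu ^ 2 * frobSq (Lm (n + 2) - Lb)
        + frobSq (Sg (n + 2) - Sg (n + 1)) + mu ^ 2 * frobSq (Lm (n + 2) - Lm (n + 1))
        + 2 * mu * frobSq (Sg (n + 2) - That)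
        ≤ frobSq (Sg (n + 1) - That) + mu ^ 2 * frobSq (Lm (n + 1) - Lb) := by
    intro Lb gb hb n
    exact step_ineq Shat lam mu hmu _ _ (Th (n + 2)) _ _ _ _ (hLmstep (n + 1)) (g (n + 1)) (g n) gb
      (pv (n + 1) That hShs hShp) (hb _ (hThstep (n + 1)).1 (hThstep (n + 1)).2.1)
  have anti : ∀ Lb : Matrix (Fin p) (Fin p) ℝ, SubG Shat lam Lb That →
      (∀ T : Matrix (Fin p) (Fin p) ℝ, T.IsSymm →
        (T - ε • (1 : Matrix (Fin p) (Fin p) ℝ)).PosSemidef → finner Lb (T - That) ≤ 0) →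
      Antitone (fun n => frobSq (Sg (n + 1) - That) + mu ^ 2 * frobSq (Lm (n + 1) - Lb)) := by
    intro Lb gb hb
    refine antitone_nat_of_succ_le fun n => ?_
    have h := lyap Lb gb hb n
    have q1 := frobSq_nonneg (Sg (n + 2) - Sg (n + 1))
    have q2 := mul_nonneg (sq_nonneg mu) (frobSq_nonneg (Lm (n + 2) - Lm (n + 1)))
    have q3 := mul_nonneg hmu.le (frobSq_nonneg (Sg (n + 2) - That))
    show frobSq (Sg (n + 2) - That) + mu ^ 2 * frobSq (Lm (n + 2) - Lb) ≤ _
    linarith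
  have conv : ∀ Lb : Matrix (Fin p) (Fin p) ℝ, SubG Shat lam Lb That →
      (∀ T : Matrix (Fin p) (Fin p) ℝ, T.IsSymm →
        (T - ε • (1 : Matrix (Fin p) (Fin p) ℝ)).PosSemidef → finner Lb (T - That) ≤ 0) →
      ∃ l, Filter.Tendsto (fun n => frobSq (Sg (n + 1) - That) + mu ^ 2 * frobSq (Lm (n + 1) - Lb))
        Filter.atTop (𝓝 l) := by
    intro Lb gb hb
    refine ⟨_, tendsto_atTop_ciInf (anti Lb gb hb) ⟨0, ?_⟩⟩
    rintro _ ⟨n, rfl⟩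
    exact add_nonneg (frobSq_nonneg _) (mul_nonneg (sq_nonneg mu) (frobSq_nonneg _))
  obtain ⟨l, hl⟩ := conv Lh gh hvi
  have hdiff := hl.sub (hl.comp (Filter.tendsto_add_atTop_nat 1))
  rw [sub_self] at hdiff
  have hSgsq : Filter.Tendsto (fun n => frobSq (Sg (n + 2) - That)) Filter.atTop (𝓝 0) := by
    have h5 := hdiff.div_const (2 * mu)
    rw [zero_div] at h5
    refine squeeze_zero (fun _ => frobSq_nonneg _) (fun n => ?_) h5
    have h := lyap Lh gh hvi n
    have q1 := frobSq_nonneg (Sg (n + 2) - Sg (n + 1))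
    have q2 := mul_nonneg (sq_nonneg mu) (frobSq_nonneg (Lm (n + 2) - Lm (n + 1)))
    rw [le_div_iff₀ (by positivity)]
    show _ ≤ frobSq (Sg (n + 1) - That) + mu ^ 2 * frobSq (Lm (n + 1) - Lh) -
      (frobSq (Sg (n + 2) - That) + mu ^ 2 * frobSq (Lm (n + 2) - Lh))
    linarith
  have hLmsq : Filter.Tendsto (fun n => frobSq (Lm (n + 2) - Lm (n + 1) - 0))
      Filter.atTop (𝓝 0) := by
    have h5 := hdiff.div_const (mu ^ 2)
    rw [zero_div] at h5
    refine squeeze_zero (fun _ => frobSq_nonneg _) (fun n => ?_) h5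
    have h := lyap Lh gh hvi n
    have q1 := frobSq_nonneg (Sg (n + 2) - Sg (n + 1))
    have q3 := mul_nonneg hmu.le (frobSq_nonneg (Sg (n + 2) - That))
    rw [le_div_iff₀ (by positivity), sub_zero]
    show _ ≤ frobSq (Sg (n + 1) - That) + mu ^ 2 * frobSq (Lm (n + 1) - Lh) -
      (frobSq (Sg (n + 2) - That) + mu ^ 2 * frobSq (Lm (n + 2) - Lh))
    linarith
  have hSg : Filter.Tendsto Sg Filter.atTop (𝓝 That) :=
    (Filter.tendsto_add_atTop_iff_nat 2).1 (tendsto_of_frobSq (fun n => Sg (n + 2)) That hSgsq)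
  have hdL := tendsto_of_frobSq (fun n => Lm (n + 2) - Lm (n + 1)) 0 hLmsq
  have hTh : Filter.Tendsto Th Filter.atTop (𝓝 That) := by
    refine (Filter.tendsto_add_atTop_iff_nat 2).1 ?_
    have e : (fun n => Th (n + 2)) =
        fun n => Sg (n + 2) - mu • (Lm (n + 2) - Lm (n + 1)) := by
      funext n
      rw [hLmstep (n + 1), sub_sub_cancel_left, smul_neg, smul_smul, mul_inv_cancel₀ hmu.ne',
        one_smul]
      abel
    rw [e]
    simpa using ((Filter.tendsto_add_atTop_iff_nat 2).2 hSg).sub (hdL.const_smul mu)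
  -- cluster point of the multipliers
  obtain ⟨Lb, φ, hφ, hLb⟩ := bdd_subseq (fun n => Lm (n + 1)) Lh
    ((frobSq (Sg 1 - That) + mu ^ 2 * frobSq (Lm 1 - Lh)) / mu ^ 2) (by
      intro n
      have h := anti Lh gh hvi (Nat.zero_le n)
      have q := frobSq_nonneg (Sg (n + 1) - That)
      simp only [zero_add] at h
      rw [le_div_iff₀ (by positivity)]
      linarith)
  have hφt := hφ.tendsto_atTop
  have hS1 : Filter.Tendsto (fun n => Sg (φ n + 1)) Filter.atTop (𝓝 That) :=
    ((Filter.tendsto_add_atTop_iff_nat 1).2 hSg).comp hφt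
  have hS0 : Filter.Tendsto (fun n => Sg (φ n)) Filter.atTop (𝓝 That) := hSg.comp hφt
  have hT1 : Filter.Tendsto (fun n => Th (φ n + 1)) Filter.atTop (𝓝 That) :=
    ((Filter.tendsto_add_atTop_iff_nat 1).2 hTh).comp hφt
  have hL1 : Filter.Tendsto (fun n => Lm (φ n + 1)) Filter.atTop (𝓝 Lb) := hLb
  have gb : SubG Shat lam Lb That := by
    intro Y
    refine le_of_tendsto' (((((continuous_offL1.tendsto That).comp hS1).const_mul lam)).add
      (tendsto_finner ((tendsto_const_nhds.sub hS1).sub hL1) (tendsto_const_nhds.sub hS1)))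
      (fun n => g (φ n) Y)
  have hb : ∀ T : Matrix (Fin p) (Fin p) ℝ, T.IsSymm →
      (T - ε • (1 : Matrix (Fin p) (Fin p) ℝ)).PosSemidef → finner Lb (T - That) ≤ 0 := by
    intro T hT hTp
    have h6 := ge_of_tendsto' (tendsto_finner ((hS1.sub hS0).sub (hL1.const_smul mu))
      ((tendsto_const_nhds (x := T)).sub hT1)) (fun n => pv (φ n) T hT hTp)
    have e : finner (That - That - mu • Lb) (T - That) = - (mu * finner Lb (T - That)) := by
      unfold finner
      simp only [Finset.mul_sum, ← Finset.sum_neg_distrib]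
      refine Finset.sum_congr rfl fun i _ => Finset.sum_congr rfl fun j _ => ?_
      simp only [Matrix.sub_apply, Matrix.smul_apply, smul_eq_mul]
      ring
    rw [e] at h6
    by_contra hc
    push Not at hc
    linarith [mul_pos hmu hc]
  obtain ⟨l', hl'⟩ := conv Lb gb hb
  have hsubl : Filter.Tendsto (fun n => frobSq (Sg (φ n + 1) - That)
      + mu ^ 2 * frobSq (Lm (φ n + 1) - Lb)) Filter.atTop (𝓝 0) := by
    have u1 := (continuous_frobSq.tendsto _).comp (hS1.sub (tendsto_const_nhds (x := That)))
    have u2 := (continuous_frobSq.tendsto _).comp (hL1.sub (tendsto_const_nhds (x := Lb)))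
    have u3 := u1.add (u2.const_mul (mu ^ 2))
    have z : frobSq (0 : Matrix (Fin p) (Fin p) ℝ) = 0 := by simp [frobSq]
    simpa only [sub_self, z, mul_zero, add_zero, Function.comp_apply] using u3
  have hl0 : l' = 0 := tendsto_nhds_unique (hl'.comp hφt) hsubl
  rw [hl0] at hl'
  have hLm : Filter.Tendsto Lm Filter.atTop (𝓝 Lb) := by
    refine (Filter.tendsto_add_atTop_iff_nat 1).1 (tendsto_of_frobSq (fun n => Lm (n + 1)) Lb ?_)
    have h5 := hl'.div_const (mu ^ 2)
    rw [zero_div] at h5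
    refine squeeze_zero (fun _ => frobSq_nonneg _) (fun n => ?_) h5
    rw [le_div_iff₀ (by positivity)]
    linarith [frobSq_nonneg (Sg (n + 1) - That)]
  exact ⟨That, That, Lb, hTh, hSg, hLm, rfl, hShp, fun S hS hSp =>
    kkt_min Shat lam That Lh S gh (hvi S hS hSp)⟩
end

section
/- Let Ŝ be a p×p real matrix and λ > 0. Suppose p×p real matrices Σ, Λ and Σ', Λ' satisfy: for all indices j ≠ l, (−Λ − Σ + Ŝ)_{jl}/λ lies in the subdifferential of the absolute value at Σ_{jl} and (−Λ' − Σ' + Ŝ)_{jl}/λ lies in the subdifferential of the absolute value at Σ'_{jl}; and for all j, (Σ − Ŝ)_{jj} + Λ_{jj} = 0 and (Σ' − Ŝ)_{jj} + Λ'_{jj} = 0. Then ⟨Σ − Σ', Λ' − Λ⟩ ≥ ‖Σ − Σ'‖_F². -/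
open scoped BigOperators

theorem inSubdiffAbs_props {g y : ℝ} (h : inSubdiffAbs g y) : |g| ≤ 1 ∧ g * y = |y| := by
  unfold inSubdiffAbs at h
  split_ifs at h with hy
  · exact ⟨h, by simp [hy]⟩
  · rcases lt_or_gt_of_ne hy with h0 | h0
    · rw [Real.sign_of_neg h0] at h
      subst h
      exact ⟨by norm_num, by rw [abs_of_neg h0]; ring⟩
    · rw [Real.sign_of_pos h0] at h
      subst h
      exact ⟨by norm_num, by rw [abs_of_pos h0]; ring⟩

theorem mul_le_abs_of_abs_le_one {g y : ℝ} (h : |g| ≤ 1) : g * y ≤ |y| :=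
  calc g * y ≤ |g * y| := le_abs_self _
    _ = |g| * |y| := abs_mul _ _
    _ ≤ 1 * |y| := mul_le_mul_of_nonneg_right h (abs_nonneg _)
    _ = |y| := one_mul _

/-- Let `Ŝ` be a `p×p` real matrix and `λ > 0`.  If `(Σ, Λ)` and `(Σ', Λ')` both satisfy
the stationarity conditions `(−Λ − Σ + Ŝ)_{jl}/λ ∈ ∂|Σ_{jl}|` for `j ≠ l` and
`(Σ − Ŝ)_{jj} + Λ_{jj} = 0`, then `⟨Σ − Σ', Λ' − Λ⟩ ≥ ‖Σ − Σ'‖_F²`. -/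
theorem stmt_7 {p : ℕ}
    (Shat Sg Lm Sg' Lm' : Matrix (Fin p) (Fin p) ℝ) (lam : ℝ) (hlam : 0 < lam)
    (hsub : ∀ j l, j ≠ l → inSubdiffAbs ((-Lm - Sg + Shat) j l / lam) (Sg j l))
    (hdiag : ∀ j, (Sg - Shat) j j + Lm j j = 0)
    (hsub' : ∀ j l, j ≠ l → inSubdiffAbs ((-Lm' - Sg' + Shat) j l / lam) (Sg' j l))
    (hdiag' : ∀ j, (Sg' - Shat) j j + Lm' j j = 0) :
    finner (Sg - Sg') (Lm' - Lm) ≥ frobSq (Sg - Sg') := by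
  unfold finner frobSq
  refine Finset.sum_le_sum fun j _ => Finset.sum_le_sum fun l _ => ?_
  simp only [Matrix.sub_apply]
  by_cases hjl : j = l
  · subst hjl
    have h1 := hdiag j
    have h2 := hdiag' j
    simp only [Matrix.sub_apply] at h1 h2
    have h3 : Lm' j j - Lm j j = Sg j j - Sg' j j := by linarith
    rw [h3, sq]
  · obtain ⟨a1, b1⟩ := inSubdiffAbs_props (hsub j l hjl)
    obtain ⟨a2, b2⟩ := inSubdiffAbs_props (hsub' j l hjl)
    have e1 : (-Lm - Sg + Shat) j l / lam * lam = -Lm j l - Sg j l + Shat j l := by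
      rw [div_mul_cancel₀ _ hlam.ne']
      simp
    have e2 : (-Lm' - Sg' + Shat) j l / lam * lam = -Lm' j l - Sg' j l + Shat j l := by
      rw [div_mul_cancel₀ _ hlam.ne']
      simp
    generalize (-Lm - Sg + Shat) j l / lam = g at *
    generalize (-Lm' - Sg' + Shat) j l / lam = g' at *
    have c1 := mul_le_abs_of_abs_le_one (y := Sg' j l) a1
    have c2 := mul_le_abs_of_abs_le_one (y := Sg j l) a2
    have h3 : Lm' j l - Lm j l = (g - g') * lam + (Sg j l - Sg' j l) := by linarith
    have h4 : 0 ≤ (Sg j l - Sg' j l) * (g - g') := by nlinarith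
    have h5 := mul_nonneg h4 hlam.le
    rw [h3]
    nlinarith
end

section
/- Let Σ⁰ = (σ⁰_{jk}) be a p×p real symmetric matrix, let A₀ = {(j,k) : j ≠ k, σ⁰_{jk} ≠ 0} with s = |A₀|, let λ > 0, and let Ŝ be a p×p real symmetric matrix satisfying max_{j,k} |Ŝ_{jk} − σ⁰_{jk}| ≤ λ. Define F(Δ) = ½‖Δ + Σ⁰ − Ŝ‖_F² + λ|Δ + Σ⁰|₁ for p×p symmetric matrices Δ. Then for every symmetric Δ with ‖Δ‖_F = 5λ√(s+p), one has F(Δ) − F(0) ≥ (5/2)λ²(s+p) > 0. -/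
open scoped BigOperators

/-- Let `Σ⁰` be a `p×p` real symmetric matrix with off-diagonal support of size `s`, let
`λ > 0`, and let `Ŝ` be a symmetric matrix with `max_{j,k} |Ŝ_{jk} − σ⁰_{jk}| ≤ λ`.  With
`F(Δ) = ½‖Δ + Σ⁰ − Ŝ‖_F² + λ|Δ + Σ⁰|₁`, every symmetric `Δ` with
`‖Δ‖_F = 5λ√(s+p)` satisfies `F(Δ) − F(0) ≥ (5/2)λ²(s+p) > 0`. -/
theorem stmt_8 {p : ℕ} (hp : 1 ≤ p)
    (Sig0 : Matrix (Fin p) (Fin p) ℝ) (hSig0 : Sig0.IsSymm)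
    (s : ℕ)
    (hs : s = (Finset.univ.filter
      (fun jk : Fin p × Fin p => jk.1 ≠ jk.2 ∧ Sig0 jk.1 jk.2 ≠ 0)).card)
    (lam : ℝ) (hlam : 0 < lam)
    (Shat : Matrix (Fin p) (Fin p) ℝ) (hShat : Shat.IsSymm)
    (hclose : ∀ j k, |Shat j k - Sig0 j k| ≤ lam)
    (Δ : Matrix (Fin p) (Fin p) ℝ) (hΔ : Δ.IsSymm)
    (hnorm : frobNorm Δ = 5 * lam * Real.sqrt (s + p)) :
    (frobSq (Δ + Sig0 - Shat) / 2 + lam * offL1 (Δ + Sig0)) -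
        (frobSq ((0 : Matrix (Fin p) (Fin p) ℝ) + Sig0 - Shat) / 2 +
          lam * offL1 ((0 : Matrix (Fin p) (Fin p) ℝ) + Sig0)) ≥
      (5 / 2) * lam ^ 2 * (s + p) ∧
    (0 : ℝ) < (5 / 2) * lam ^ 2 * (s + p) := by
  have hN : (0 : ℝ) < (s : ℝ) + p := by
    have : (1 : ℝ) ≤ p := by exact_mod_cast hp
    positivity
  refine ⟨?_, by positivity⟩
  have hsq : frobSq Δ = 25 * lam ^ 2 * (s + p) := by
    have h0 : 0 ≤ frobSq Δ := by unfold frobSq; positivity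
    have h1 : frobSq Δ = frobNorm Δ ^ 2 := by
      unfold frobNorm; rw [Real.sq_sqrt h0]
    rw [h1, hnorm, mul_pow, Real.sq_sqrt hN.le]; ring
  have hcount : ∑ i : Fin p, ∑ j : Fin p, ((if i = j then (1 : ℝ) else 0)
      + (if i ≠ j ∧ Sig0 i j ≠ 0 then (1 : ℝ) else 0)) = s + p := by
    have hs' : (s : ℝ) = ∑ i : Fin p, ∑ j : Fin p,
        (if i ≠ j ∧ Sig0 i j ≠ 0 then (1 : ℝ) else 0) := by
      rw [hs, Finset.card_filter, ← Fintype.sum_prod_type']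
      push_cast
      rfl
    simp only [Finset.sum_add_distrib]
    rw [← hs']
    simp [add_comm]
  have hentry : ∀ i j : Fin p, 3 / 10 * (Δ i j) ^ 2 - 5 * lam ^ 2 *
      ((if i = j then (1 : ℝ) else 0) + (if i ≠ j ∧ Sig0 i j ≠ 0 then (1 : ℝ) else 0))
      ≤ ((Δ i j + Sig0 i j - Shat i j) ^ 2 / 2
          + lam * (if i ≠ j then |Δ i j + Sig0 i j| else 0))
        - ((Sig0 i j - Shat i j) ^ 2 / 2 + lam * (if i ≠ j then |Sig0 i j| else 0)) := by
    intro i j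
    have hc := hclose i j
    generalize Δ i j = d
    generalize Sig0 i j = a at *
    generalize Shat i j = b at *
    have h1 : d * (b - a) ≤ lam * |d| := by
      calc d * (b - a) ≤ |d * (b - a)| := le_abs_self _
        _ = |b - a| * |d| := by rw [abs_mul, mul_comm]
        _ ≤ lam * |d| := mul_le_mul_of_nonneg_right hc (abs_nonneg _)
    have h2 : 0 ≤ lam * |d| := by positivity
    have h3 : 2 * (lam * |d|) ≤ d ^ 2 / 5 + 5 * lam ^ 2 := by
      have := sq_nonneg (|d| - 5 * lam)
      have h := sq_abs d
      nlinarith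
    by_cases hij : i = j
    · simp only [hij, ne_eq, not_true_eq_false, false_and, if_true, if_false]
      nlinarith [sq_nonneg d]
    · by_cases ha : a = 0
      · simp only [hij, ha, ne_eq, not_true_eq_false, not_false_eq_true, and_false, if_true,
          if_false, abs_zero, add_zero]
        subst ha
        nlinarith [sq_nonneg d]
      · simp only [hij, ha, ne_eq, not_false_eq_true, and_true, if_true, if_false]
        have h4 : |a| ≤ |d + a| + |d| := by
          have := abs_sub (d + a) d
          simpa using this
        have h5 := mul_le_mul_of_nonneg_left h4 hlam.le
        nlinarith [sq_nonneg d]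
  have hsum := Finset.sum_le_sum (s := Finset.univ) fun i _ =>
    Finset.sum_le_sum (s := Finset.univ) fun j _ => hentry i j
  simp only [Finset.sum_sub_distrib, ← Finset.mul_sum] at hsum
  rw [hcount] at hsum
  simp only [Finset.sum_add_distrib, ← Finset.mul_sum, ← Finset.sum_div] at hsum
  unfold frobSq at hsq
  rw [hsq] at hsum
  rw [zero_add]
  simp only [frobSq, offL1, Matrix.add_apply, Matrix.sub_apply]
  linarith
end

section
/- Let Σ⁰ = (σ⁰_{jk}) be a p×p real symmetric positive definite matrix, let A₀ = {(j,k) : j ≠ k, σ⁰_{jk} ≠ 0} with s = |A₀|, let λ > 0, let 0 < ε be smaller than the minimal eigenvalue of Σ⁰, and let Ŝ be a p×p real symmetric matrix satisfying max_{j,k} |Ŝ_{jk} − σ⁰_{jk}| ≤ λ. Then any minimizer Σ̂⁺ of ½‖Σ − Ŝ‖_F² + λ|Σ|₁ over symmetric matrices Σ with Σ − εI positive semidefinite satisfies ‖Σ̂⁺ − Σ⁰‖_F ≤ 5λ√(s+p). -/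
open scoped BigOperators

/-- Let `Σ⁰` be a `p×p` symmetric positive definite matrix with off-diagonal support of
size `s`, `λ > 0`, `0 < ε` smaller than the minimal eigenvalue of `Σ⁰` (i.e. `Σ⁰ − εI`
is positive definite), and `Ŝ` symmetric with `max_{j,k} |Ŝ_{jk} − σ⁰_{jk}| ≤ λ`.  Then
any minimizer `Σ̂⁺` of `½‖Σ − Ŝ‖_F² + λ|Σ|₁` over symmetric matrices `Σ` with `Σ − εI`
positive semidefinite satisfies `‖Σ̂⁺ − Σ⁰‖_F ≤ 5λ√(s+p)`. -/
theorem stmt_9 {p : ℕ} (hp : 1 ≤ p)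
    (Sig0 : Matrix (Fin p) (Fin p) ℝ) (hSig0 : Sig0.IsSymm) (hSig0pd : Sig0.PosDef)
    (s : ℕ)
    (hs : s = (Finset.univ.filter
      (fun jk : Fin p × Fin p => jk.1 ≠ jk.2 ∧ Sig0 jk.1 jk.2 ≠ 0)).card)
    (lam : ℝ) (hlam : 0 < lam)
    (ε : ℝ) (hε : 0 < ε)
    (hεmin : (Sig0 - ε • (1 : Matrix (Fin p) (Fin p) ℝ)).PosDef)
    (Shat : Matrix (Fin p) (Fin p) ℝ) (hShat : Shat.IsSymm)
    (hclose : ∀ j k, |Shat j k - Sig0 j k| ≤ lam)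
    (Sgplus : Matrix (Fin p) (Fin p) ℝ) (hSgplusSymm : Sgplus.IsSymm)
    (hSgplusPsd : (Sgplus - ε • (1 : Matrix (Fin p) (Fin p) ℝ)).PosSemidef)
    (hmin : ∀ Sg : Matrix (Fin p) (Fin p) ℝ, Sg.IsSymm →
      (Sg - ε • (1 : Matrix (Fin p) (Fin p) ℝ)).PosSemidef →
      frobSq (Sgplus - Shat) / 2 + lam * offL1 Sgplus ≤
        frobSq (Sg - Shat) / 2 + lam * offL1 Sg) :
    frobNorm (Sgplus - Sig0) ≤ 5 * lam * Real.sqrt (s + p) := by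
  have hsym := hmin Sig0 hSig0 hεmin.posSemidef
  have key : ∀ i j : Fin p,
      (Sgplus i j - Sig0 i j) ^ 2 / 4 ≤
        ((Sgplus i j - Shat i j) ^ 2 / 2 + lam * (if i ≠ j then |Sgplus i j| else 0))
        - ((Sig0 i j - Shat i j) ^ 2 / 2 + lam * (if i ≠ j then |Sig0 i j| else 0))
        + 4 * lam ^ 2 * ((if i ≠ j ∧ Sig0 i j ≠ 0 then 1 else 0) + (if i = j then 1 else 0)) := by
    intro i j
    have hw := abs_le.1 (hclose i j)
    generalize Sgplus i j = x at *
    generalize Shat i j = w at *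
    generalize hv : Sig0 i j = a at *
    have h1 : (x - a) * (w - a) ≤ lam * |x - a| := by
      calc (x - a) * (w - a) ≤ |(x - a) * (w - a)| := le_abs_self _
        _ = |x - a| * |w - a| := abs_mul _ _
        _ ≤ |x - a| * lam := by
          apply mul_le_mul_of_nonneg_left (abs_le.2 hw) (abs_nonneg _)
        _ = _ := mul_comm _ _
    have h2 : |x - a| ^ 2 = (x - a) ^ 2 := sq_abs _
    have h3 : lam * |a| ≤ lam * (|x| + |x - a|) := by
      apply mul_le_mul_of_nonneg_left _ hlam.le
      have := abs_sub_abs_le_abs_sub a x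
      rw [abs_sub_comm] at this
      linarith
    have h4 := sq_nonneg (|x - a| - 4 * lam)
    have h5 := sq_nonneg (|x - a| - 2 * lam)
    by_cases hij : i = j
    · simp [hij]
      nlinarith
    · by_cases ha : a = 0
      · subst ha
        simp [hij] at *
        nlinarith [sq_nonneg x]
      · simp [hij, ha]
        nlinarith
  have hsum := Finset.sum_le_sum (fun i (_ : i ∈ Finset.univ) =>
    Finset.sum_le_sum (fun j (_ : j ∈ Finset.univ) => key i j))
  simp only [Finset.sum_add_distrib, Finset.sum_sub_distrib, ← Finset.mul_sum,
    ← Finset.sum_div] at hsum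
  have hc : (∑ i : Fin p, ∑ j : Fin p, (if i ≠ j ∧ Sig0 i j ≠ 0 then (1 : ℝ) else 0)) = s := by
    rw [hs, ← Finset.sum_product', Finset.univ_product_univ, Finset.sum_boole]
  have hd : (∑ i : Fin p, ∑ j : Fin p, (if i = j then (1 : ℝ) else 0)) = p := by
    simp
  rw [hc, hd] at hsum
  unfold frobNorm
  simp only [frobSq, offL1, Matrix.sub_apply] at hsym ⊢
  have hfin : (∑ i, ∑ j, (Sgplus i j - Sig0 i j) ^ 2) ≤ (4 * lam) ^ 2 * (s + p) := by
    linarith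
  calc _ ≤ Real.sqrt ((4 * lam) ^ 2 * (s + p)) := Real.sqrt_le_sqrt hfin
    _ = 4 * lam * Real.sqrt (s + p) := by
      rw [Real.sqrt_mul (sq_nonneg _), Real.sqrt_sq (by linarith)]
    _ ≤ _ := by
      apply mul_le_mul_of_nonneg_right _ (Real.sqrt_nonneg _)
      linarith
end

section
/- Let X and Y be real random variables on a probability space, and suppose there exist η > 0 and K₁ > 0 such that E[exp(η·X²)] ≤ K₁ and E[exp(η·Y²)] ≤ K₁. Then E[X²Y²·exp(½η|XY|)] ≤ 4K₁·η^{-2}. -/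
open MeasureTheory

theorem aux_sq_le_exp (u : ℝ) (hu : 0 ≤ u) : u ^ 2 ≤ Real.exp u := by
  have h := Real.quadratic_le_exp_of_nonneg (x := u / 2) (by positivity)
  have h1 : u ≤ Real.exp (u / 2) := by nlinarith [sq_nonneg (u - 2)]
  have h2 : Real.exp u = Real.exp (u / 2) ^ 2 := by
    rw [← Real.exp_nat_mul]; congr 1; push_cast; ring
  rw [h2]
  gcongr

theorem aux_pointwise (x y η : ℝ) (hη : 0 < η) :
    x ^ 2 * y ^ 2 * Real.exp (1 / 2 * η * |x * y|)
      ≤ 2 / η ^ 2 * (Real.exp (η * x ^ 2) + Real.exp (η * y ^ 2)) := by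
  set u := 1 / 2 * η * |x * y| with hu
  have hu0 : 0 ≤ u := by positivity
  have h1 := aux_sq_le_exp u hu0
  have h2 : x ^ 2 * y ^ 2 = 4 / η ^ 2 * u ^ 2 := by
    rw [hu, mul_pow, sq_abs]; field_simp; ring
  have h3 : Real.exp u * Real.exp u
      ≤ (Real.exp (η * x ^ 2) + Real.exp (η * y ^ 2)) / 2 := by
    have ha : Real.exp u * Real.exp u
        ≤ Real.exp (η * x ^ 2 / 2) * Real.exp (η * y ^ 2 / 2) := by
      rw [← Real.exp_add, ← Real.exp_add]
      apply Real.exp_le_exp.mpr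
      rw [hu, abs_mul]
      nlinarith [mul_nonneg hη.le (sq_nonneg (|x| - |y|)), sq_abs x, sq_abs y]
    have hb : ∀ z : ℝ, Real.exp z = Real.exp (z / 2) ^ 2 := fun z => by
      rw [← Real.exp_nat_mul]; congr 1; push_cast; ring
    rw [hb (η * x ^ 2), hb (η * y ^ 2)]
    nlinarith [sq_nonneg (Real.exp (η * x ^ 2 / 2) - Real.exp (η * y ^ 2 / 2))]
  calc x ^ 2 * y ^ 2 * Real.exp u = 4 / η ^ 2 * (u ^ 2 * Real.exp u) := by rw [h2]; ring
    _ ≤ 4 / η ^ 2 * (Real.exp u * Real.exp u) := by gcongr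
    _ ≤ 4 / η ^ 2 * ((Real.exp (η * x ^ 2) + Real.exp (η * y ^ 2)) / 2) := by gcongr
    _ = _ := by ring

/-- Let `X`, `Y` be real random variables with `E[exp(η X²)] ≤ K₁` and
`E[exp(η Y²)] ≤ K₁` for some `η > 0`, `K₁ > 0`.  Then
`E[X² Y² exp(½ η |XY|)] ≤ 4 K₁ η⁻²`. -/
theorem stmt_14 {Ω : Type*} [MeasurableSpace Ω] (μ : Measure Ω) [IsProbabilityMeasure μ]
    (X Y : Ω → ℝ) (hX : Measurable X) (hY : Measurable Y)
    (η K₁ : ℝ) (hη : 0 < η) (hK₁ : 0 < K₁)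
    (hXtail : ∫⁻ ω, ENNReal.ofReal (Real.exp (η * X ω ^ 2)) ∂μ ≤ ENNReal.ofReal K₁)
    (hYtail : ∫⁻ ω, ENNReal.ofReal (Real.exp (η * Y ω ^ 2)) ∂μ ≤ ENNReal.ofReal K₁) :
    ∫⁻ ω, ENNReal.ofReal (X ω ^ 2 * Y ω ^ 2 * Real.exp (1 / 2 * η * |X ω * Y ω|)) ∂μ
      ≤ ENNReal.ofReal (4 * K₁ / η ^ 2) := by
  calc _ ≤ ∫⁻ ω, ENNReal.ofReal (2 / η ^ 2) * (ENNReal.ofReal (Real.exp (η * X ω ^ 2))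
        + ENNReal.ofReal (Real.exp (η * Y ω ^ 2))) ∂μ := by
        apply lintegral_mono
        intro ω
        dsimp only
        rw [← ENNReal.ofReal_add (by positivity) (by positivity),
          ← ENNReal.ofReal_mul (by positivity)]
        exact ENNReal.ofReal_le_ofReal (aux_pointwise _ _ _ hη)
    _ = ENNReal.ofReal (2 / η ^ 2) * (∫⁻ ω, ENNReal.ofReal (Real.exp (η * X ω ^ 2)) ∂μ
        + ∫⁻ ω, ENNReal.ofReal (Real.exp (η * Y ω ^ 2)) ∂μ) := by
        rw [lintegral_const_mul _ (by fun_prop), lintegral_add_left (by fun_prop)]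
    _ ≤ ENNReal.ofReal (2 / η ^ 2) * (ENNReal.ofReal K₁ + ENNReal.ofReal K₁) := by gcongr
    _ = _ := by
        rw [← ENNReal.ofReal_add hK₁.le hK₁.le, ← ENNReal.ofReal_mul (by positivity)]
        congr 1; ring
end

section
/- Let X and Y be real random variables, let η > 0, K₁ > 0, σ_max > 0 satisfy E[exp(t·X²)] ≤ K₁ and E[exp(t·Y²)] ≤ K₁ for all |t| ≤ η, and suppose σ = E[XY] satisfies |σ| ≤ σ_max. Then for any 0 < t₁ ≤ η/2, E[(XY − σ)²·exp(t₁|XY − σ|)] ≤ 2K₁(4η^{-2} + σ_max²)·exp(½η·σ_max). -/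
open MeasureTheory

theorem aux_pt (x y η s σ t : ℝ) (hη : 0 < η) (hσ : |σ| ≤ s) (ht : 0 < t) (htη : t ≤ η / 2) :
    (x * y - σ) ^ 2 * Real.exp (t * |x * y - σ|) ≤
      ((4 / η ^ 2 + s ^ 2) * Real.exp (1 / 2 * η * s)) *
        (Real.exp (η * x ^ 2) + Real.exp (η * y ^ 2)) := by
  obtain ⟨z, hz⟩ : ∃ z, z = |x * y| := ⟨_, rfl⟩
  have hz0 : 0 ≤ z := hz ▸ abs_nonneg _
  have hs : 0 ≤ s := (abs_nonneg _).trans hσ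
  have habs : |x * y - σ| ≤ z + s := by
    rw [hz]; exact (abs_sub _ _).trans (by linarith)
  have h1 : (x * y - σ) ^ 2 ≤ 2 * (z ^ 2 + s ^ 2) := by
    rw [← sq_abs]
    have := pow_le_pow_left₀ (abs_nonneg _) habs 2
    nlinarith [sq_nonneg (z - s)]
  have h2 : Real.exp (t * |x * y - σ|) ≤ Real.exp (η / 2 * z) * Real.exp (1 / 2 * η * s) := by
    rw [← Real.exp_add]
    apply Real.exp_le_exp.mpr
    calc t * |x * y - σ| ≤ η / 2 * (z + s) := by gcongr
      _ = _ := by ring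
  have hE : Real.exp (η * z) = Real.exp (η / 2 * z) * Real.exp (η / 2 * z) := by
    rw [← Real.exp_add]; congr 1; ring
  have h1e : 1 ≤ Real.exp (η / 2 * z) := Real.one_le_exp (by positivity)
  have h3 : z ^ 2 ≤ 4 / η ^ 2 * Real.exp (η / 2 * z) := by
    have := aux_sq_le_exp (η / 2 * z) (by positivity)
    calc z ^ 2 = 4 / η ^ 2 * (η / 2 * z) ^ 2 := by field_simp; ring
      _ ≤ _ := by gcongr
  have h4 : z ^ 2 + s ^ 2 ≤ (4 / η ^ 2 + s ^ 2) * Real.exp (η / 2 * z) := by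
    nlinarith [sq_nonneg s]
  have h5 : 2 * Real.exp (η * z) ≤ Real.exp (η * x ^ 2) + Real.exp (η * y ^ 2) := by
    have e1 : Real.exp (η * x ^ 2) = Real.exp (η / 2 * x ^ 2) ^ 2 := by
      rw [← Real.exp_nat_mul]; congr 1; push_cast; ring
    have e2 : Real.exp (η * y ^ 2) = Real.exp (η / 2 * y ^ 2) ^ 2 := by
      rw [← Real.exp_nat_mul]; congr 1; push_cast; ring
    have e3 : Real.exp (η * z) ≤ Real.exp (η / 2 * x ^ 2) * Real.exp (η / 2 * y ^ 2) := by
      rw [← Real.exp_add]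
      apply Real.exp_le_exp.mpr
      have : z ≤ (x ^ 2 + y ^ 2) / 2 := by
        rw [hz, abs_mul, ← sq_abs x, ← sq_abs y]
        nlinarith [sq_nonneg (|x| - |y|)]
      calc η * z ≤ η * ((x ^ 2 + y ^ 2) / 2) := by gcongr
        _ = _ := by ring
    rw [e1, e2]
    nlinarith [sq_nonneg (Real.exp (η / 2 * x ^ 2) - Real.exp (η / 2 * y ^ 2))]
  calc _ ≤ (2 * ((4 / η ^ 2 + s ^ 2) * Real.exp (η / 2 * z))) *
        (Real.exp (η / 2 * z) * Real.exp (1 / 2 * η * s)) := by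
        apply mul_le_mul (h1.trans (by linarith)) h2 (Real.exp_pos _).le (by positivity)
    _ = ((4 / η ^ 2 + s ^ 2) * Real.exp (1 / 2 * η * s)) * (2 * Real.exp (η * z)) := by
        rw [hE]; ring
    _ ≤ _ := by gcongr

/-- Let `X`, `Y` be real random variables with `E[exp(t X²)] ≤ K₁` and
`E[exp(t Y²)] ≤ K₁` for all `|t| ≤ η`, and suppose `σ = E[XY]` satisfies `|σ| ≤ σ_max`.
Then for any `0 < t₁ ≤ η/2`,
`E[(XY − σ)² exp(t₁ |XY − σ|)] ≤ 2 K₁ (4 η⁻² + σ_max²) exp(½ η σ_max)`. -/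
theorem stmt_15 {Ω : Type*} [MeasurableSpace Ω] (μ : Measure Ω) [IsProbabilityMeasure μ]
    (X Y : Ω → ℝ) (hX : Measurable X) (hY : Measurable Y)
    (η K₁ σmax : ℝ) (hη : 0 < η) (hK₁ : 0 < K₁) (hσmax : 0 < σmax)
    (hXtail : ∀ t : ℝ, |t| ≤ η →
      ∫⁻ ω, ENNReal.ofReal (Real.exp (t * X ω ^ 2)) ∂μ ≤ ENNReal.ofReal K₁)
    (hYtail : ∀ t : ℝ, |t| ≤ η →
      ∫⁻ ω, ENNReal.ofReal (Real.exp (t * Y ω ^ 2)) ∂μ ≤ ENNReal.ofReal K₁)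
    (σ : ℝ) (hσ : σ = ∫ ω, X ω * Y ω ∂μ) (hσb : |σ| ≤ σmax)
    (t₁ : ℝ) (ht₁ : 0 < t₁) (ht₁η : t₁ ≤ η / 2) :
    ∫⁻ ω, ENNReal.ofReal ((X ω * Y ω - σ) ^ 2 * Real.exp (t₁ * |X ω * Y ω - σ|)) ∂μ
      ≤ ENNReal.ofReal (2 * K₁ * (4 / η ^ 2 + σmax ^ 2) * Real.exp (1 / 2 * η * σmax)) := by
  have hx := hXtail η (abs_of_pos hη).le
  have hy := hYtail η (abs_of_pos hη).le
  obtain ⟨C, hC⟩ : ∃ C, C = (4 / η ^ 2 + σmax ^ 2) * Real.exp (1 / 2 * η * σmax) := ⟨_, rfl⟩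
  have hC0 : 0 ≤ C := by rw [hC]; positivity
  calc _ ≤ ∫⁻ ω, ENNReal.ofReal C * (ENNReal.ofReal (Real.exp (η * X ω ^ 2)) +
          ENNReal.ofReal (Real.exp (η * Y ω ^ 2))) ∂μ := by
        apply lintegral_mono
        intro ω
        dsimp only
        rw [← ENNReal.ofReal_add (Real.exp_pos _).le (Real.exp_pos _).le,
          ← ENNReal.ofReal_mul hC0, hC]
        exact ENNReal.ofReal_le_ofReal (aux_pt _ _ _ _ _ _ hη hσb ht₁ ht₁η)
    _ = ENNReal.ofReal C * (∫⁻ ω, ENNReal.ofReal (Real.exp (η * X ω ^ 2)) ∂μ +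
          ∫⁻ ω, ENNReal.ofReal (Real.exp (η * Y ω ^ 2)) ∂μ) := by
        rw [lintegral_const_mul _ (by fun_prop), lintegral_add_left (by fun_prop)]
    _ ≤ ENNReal.ofReal C * (ENNReal.ofReal K₁ + ENNReal.ofReal K₁) := by gcongr
    _ = _ := by
        rw [← ENNReal.ofReal_add hK₁.le hK₁.le, ← ENNReal.ofReal_mul hC0, hC]
        congr 1; ring
end
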